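/- Let Σ be a closed hypersurface of ℝⁿ (not necessarily connected) and let K be a bounded measurable subset of ℝⁿ, symmetric with respect to the origin and containing the origin in its interior. Then there exists a hypersurface Σ̃ of ℝⁿ isotopic to Σ and a real-valued Schwartz function f whose Fourier transform has compact support contained in K, such that f vanishes transversally along Σ̃. -/

import Mathlib

open scoped FourierTransform

noncomputable section

abbrev En (n : ℕ) := EuclideanSpace ℝ (Fin n)

/-- A diffeomorphism of `ℝⁿ`. -/
def IsDiffeo {n : ℕ} (φ : En n → En n) : Prop :=
  ∃ ψ : En n → En n, ContDiff ℝ (⊤ : ℕ∞) φ ∧ ContDiff ℝ (⊤ : ℕ∞) ψ ∧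
    Function.LeftInverse ψ φ ∧ Function.RightInverse ψ φ

/-- Two subsets of `ℝⁿ` are isotopic if they are related by an ambient isotopy, i.e. a continuous
family of diffeomorphisms starting at the identity. -/
def Isotopic {n : ℕ} (S S' : Set (En n)) : Prop :=
  ∃ φ : ℝ → En n → En n,
    Continuous (fun p : ℝ × En n => φ p.1 p.2) ∧
    (∀ t ∈ Set.Icc (0:ℝ) 1, IsDiffeo (φ t)) ∧
    φ 0 = id ∧ φ 1 '' S = S'

/-- A closed hypersurface of `ℝⁿ`: a compact set which is the zero set of a smooth function
having `0` as a regular value there. -/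
def IsClosedHypersurface {n : ℕ} (S : Set (En n)) : Prop :=
  IsCompact S ∧ ∃ g : En n → ℝ, ContDiff ℝ (⊤ : ℕ∞) g ∧ S = g ⁻¹' {0} ∧
    ∀ x ∈ S, fderiv ℝ g x ≠ 0

/-!
Let `G` be a compactly supported smooth function vanishing transversally along `Σ`. Truncating its
Fourier transform at high frequencies gives real Schwartz functions with compactly supported
Fourier transform which are arbitrarily `C¹`-close to `G`. Transversality is stable under such
perturbations: the zero of a nearby function along each line `x + ℝ ν x`, where `ν` is a field
transverse to `Σ`, is unique near `x` and depends smoothly on `x`, so `Σ` is moved onto zeros of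
that function by `x ↦ x + u x` for some contraction `u`. Shrinking `u` to `0` makes this an
isotopy. Finally, dilating space is also an isotopy, and it pushes the Fourier support into `K`.
-/

open MeasureTheory Filter Set Metric
open scoped NNReal ContDiff SchwartzMap Topology ComplexConjugate Pointwise

section FourierBounds

variable {V E : Type*} [NormedAddCommGroup V] [InnerProductSpace ℝ V] [FiniteDimensional ℝ V]
  [MeasurableSpace V] [BorelSpace V] [NormedAddCommGroup E] [NormedSpace ℂ E]

theorem norm_fderiv_fourier_le {f : V → E} (hf : Integrable f)
    (hvf : Integrable fun v => ‖v‖ * ‖f v‖) (x : V) :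
    ‖fderiv ℝ (𝓕 f) x‖ ≤ 2 * Real.pi * ∫ v, ‖v‖ * ‖f v‖ := by
  rw [Real.fderiv_fourier hf hvf, ← integral_const_mul]
  refine (VectorFourier.norm_fourierIntegral_le_integral_norm ..).trans
    (integral_mono_of_nonneg (.of_forall fun _ => norm_nonneg _) (hvf.const_mul _)
      (.of_forall fun v => ?_))
  dsimp only
  rw [VectorFourier.norm_fourierSMulRight, innerSL_apply_norm ℝ v, mul_assoc]

theorem integrable_norm_mul_norm (g : 𝓢(V, E)) : Integrable fun v => ‖v‖ * ‖g v‖ :=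
  (g.integrable_pow_mul volume 1).congr (.of_forall fun v => by dsimp only; rw [pow_one])

variable [CompleteSpace E]

theorem coe_eq_fourier_fourier_comp_neg (g : 𝓢(V, E)) :
    (g : V → E) = fun x => 𝓕 ((𝓕 g : 𝓢(V, E)) : V → E) (-x) := by
  funext x
  rw [← Real.fourierInv_eq_fourier_neg, ← SchwartzMap.fourierInv_coe,
    FourierTransform.fourierInv_fourier_eq]

theorem norm_le_integral_norm_fourier (g : 𝓢(V, E)) (x : V) : ‖g x‖ ≤ ∫ v, ‖𝓕 g v‖ := by
  rw [congrFun (coe_eq_fourier_fourier_comp_neg g) x]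
  exact VectorFourier.norm_fourierIntegral_le_integral_norm ..

theorem norm_fderiv_le_integral_norm_mul_norm_fourier (g : 𝓢(V, E)) (x : V) :
    ‖fderiv ℝ g x‖ ≤ 2 * Real.pi * ∫ v, ‖v‖ * ‖𝓕 g v‖ := by
  have hneg : fderiv ℝ g x = -fderiv ℝ (𝓕 ((𝓕 g : 𝓢(V, E)) : V → E)) (-x) := by
    conv_lhs => rw [coe_eq_fourier_fourier_comp_neg g]
    simpa only [neg_one_smul] using
      fderiv_comp_smul (f := 𝓕 ((𝓕 g : 𝓢(V, E)) : V → E)) (x := x) (-1 : ℝ)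
  rw [hneg, norm_neg]
  exact norm_fderiv_fourier_le (𝓕 g).integrable (integrable_norm_mul_norm (𝓕 g)) _

end FourierBounds

section LowPass

variable {V E : Type*} [NormedAddCommGroup V] [InnerProductSpace ℝ V] [FiniteDimensional ℝ V]

/-- A smooth cutoff on `V`, equal to `1` on the ball of radius `m + 1` and to `0` outside the ball
of radius `m + 2`. -/
def ballCutoff (V : Type*) [NormedAddCommGroup V] (m : ℕ) : ContDiffBump (0 : V) :=
  ⟨m + 1, m + 2, by positivity, by linarith⟩

theorem eventually_ballCutoff_eq_one (v : V) : ∀ᶠ m in atTop, ballCutoff V m v = 1 := by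
  filter_upwards [eventually_ge_atTop ⌈‖v‖⌉₊] with m hm
  refine (ballCutoff V m).one_of_mem_closedBall (mem_closedBall_zero_iff.2 ?_)
  exact (Nat.ceil_le.1 hm).trans (le_add_of_nonneg_right zero_le_one)

theorem abs_ballCutoff_sub_one_le (m : ℕ) (v : V) : |ballCutoff V m v - 1| ≤ 1 := by
  rw [abs_le]
  constructor <;> linarith [(ballCutoff V m).nonneg (x := v), (ballCutoff V m).le_one (x := v)]

theorem hasTemperateGrowth_ballCutoff (m : ℕ) : (ballCutoff V m : V → ℝ).HasTemperateGrowth :=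
  (ballCutoff V m).hasCompactSupport.hasTemperateGrowth (ballCutoff V m).contDiff

variable [MeasurableSpace V] [BorelSpace V]

theorem tendsto_integral_abs_ballCutoff_sub_one_mul {μ : Measure V} {h : V → ℝ}
    (hh : Integrable h μ) :
    Tendsto (fun m => ∫ v, |ballCutoff V m v - 1| * h v ∂μ) atTop (𝓝 0) := by
  have hlim : Tendsto (fun m => ∫ v, |ballCutoff V m v - 1| * h v ∂μ) atTop (𝓝 (∫ _, 0 ∂μ)) := by
    refine tendsto_integral_of_dominated_convergence (fun v => ‖h v‖) (fun m => ?_) hh.norm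
      (fun m => .of_forall fun v => ?_) (.of_forall fun v => ?_)
    · have hcont : Continuous fun v => |ballCutoff V m v - 1| :=
        ((ballCutoff V m).continuous.sub continuous_const).abs
      exact hcont.aestronglyMeasurable.mul hh.aestronglyMeasurable
    · rw [norm_mul, Real.norm_eq_abs, abs_abs]
      exact mul_le_of_le_one_left (norm_nonneg _) (abs_ballCutoff_sub_one_le m v)
    · refine tendsto_const_nhds.congr' ?_
      filter_upwards [eventually_ballCutoff_eq_one v] with m hm
      rw [hm, sub_self, abs_zero, zero_mul]
  simpa only [integral_zero] using hlim

variable [NormedAddCommGroup E] [NormedSpace ℂ E]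

/-- The low-pass filter which multiplies the Fourier transform by `ballCutoff V m`. -/
def lowPass (m : ℕ) (g : 𝓢(V, E)) : 𝓢(V, E) :=
  SchwartzMap.fourierMultiplierCLM E (ballCutoff V m) g

variable [CompleteSpace E]

theorem fourier_lowPass_apply (m : ℕ) (g : 𝓢(V, E)) (v : V) :
    𝓕 (lowPass m g) v = ballCutoff V m v • 𝓕 g v := by
  rw [lowPass, SchwartzMap.fourierMultiplierCLM_apply, FourierTransform.fourier_fourierInv_eq,
    SchwartzMap.smulLeftCLM_apply_apply (hasTemperateGrowth_ballCutoff m)]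

theorem hasCompactSupport_fourier_lowPass (m : ℕ) (g : 𝓢(V, E)) :
    HasCompactSupport (𝓕 (lowPass m g : V → E)) := by
  have h : 𝓕 (lowPass m g : V → E) = fun v => ballCutoff V m v • 𝓕 g v :=
    funext (fourier_lowPass_apply m g)
  rw [h]
  exact (ballCutoff V m).hasCompactSupport.smul_right

theorem norm_fourier_lowPass_sub (m : ℕ) (g : 𝓢(V, E)) (v : V) :
    ‖𝓕 (lowPass m g - g) v‖ = |ballCutoff V m v - 1| * ‖𝓕 g v‖ := by
  have hsub : 𝓕 (lowPass m g - g) = 𝓕 (lowPass m g) - 𝓕 g :=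
    map_sub (FourierTransform.fourierCLM ℂ 𝓢(V, E)) _ _
  rw [hsub, sub_apply, fourier_lowPass_apply, ← Real.norm_eq_abs,
    ← norm_smul, sub_smul, one_smul]

theorem eventually_norm_lowPass_sub_le (g : 𝓢(V, E)) {ε : ℝ} (hε : 0 < ε) :
    ∀ᶠ m in atTop, ∀ x, ‖lowPass m g x - g x‖ ≤ ε := by
  have hlim := tendsto_integral_abs_ballCutoff_sub_one_mul
    ((𝓕 g : 𝓢(V, E)).integrable (μ := volume)).norm
  filter_upwards [hlim.eventually_le_const hε] with m hm x
  calc ‖lowPass m g x - g x‖ ≤ ∫ v, ‖𝓕 (lowPass m g - g) v‖ :=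
        norm_le_integral_norm_fourier (lowPass m g - g) x
    _ ≤ ε := by simpa only [norm_fourier_lowPass_sub] using hm

theorem eventually_lipschitzWith_lowPass_sub (g : 𝓢(V, E)) {ε : ℝ≥0} (hε : 0 < ε) :
    ∀ᶠ m in atTop, LipschitzWith ε fun x => lowPass m g x - g x := by
  have hlim :=
    (tendsto_integral_abs_ballCutoff_sub_one_mul (integrable_norm_mul_norm (𝓕 g))).const_mul
      (2 * Real.pi)
  rw [mul_zero] at hlim
  filter_upwards [hlim.eventually_le_const (NNReal.coe_pos.2 hε)] with m hm
  refine lipschitzWith_of_nnnorm_fderiv_le (𝕜 := ℝ) (lowPass m g - g).differentiable fun x => ?_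
  calc ‖fderiv ℝ (lowPass m g - g) x‖
      ≤ 2 * Real.pi * ∫ v, ‖v‖ * ‖𝓕 (lowPass m g - g) v‖ :=
        norm_fderiv_le_integral_norm_mul_norm_fourier _ x
    _ ≤ ε := by simpa only [norm_fourier_lowPass_sub, mul_left_comm ‖_‖] using hm

end LowPass

section RealValued

variable {V : Type*} [NormedAddCommGroup V] [InnerProductSpace ℝ V] [FiniteDimensional ℝ V]
  [MeasurableSpace V] [BorelSpace V]

theorem conj_fourier (f : V → ℂ) (w : V) : conj (𝓕 f w) = 𝓕 (fun v => conj (f v)) (-w) := by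
  rw [Real.fourier_eq', Real.fourier_eq', ← integral_conj]
  congr 1 with v
  rw [smul_eq_mul, smul_eq_mul, map_mul, ← Complex.exp_conj, map_mul, Complex.conj_ofReal,
    Complex.conj_I, inner_neg_right]
  push_cast
  ring_nf

theorem im_lowPass_apply_eq_zero (m : ℕ) {g : 𝓢(V, ℂ)} (hg : ∀ x, (g x).im = 0) (x : V) :
    (lowPass m g x).im = 0 := by
  have hgconj : (fun v => conj (g v)) = g := funext fun v => Complex.conj_eq_iff_im.2 (hg v)
  have hherm : (fun v => conj (𝓕 (lowPass m g) v)) = fun v => 𝓕 (lowPass m g) (-v) := by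
    funext v
    rw [fourier_lowPass_apply, fourier_lowPass_apply, (ballCutoff V m).neg, Complex.real_smul,
      Complex.real_smul, map_mul, Complex.conj_ofReal, SchwartzMap.fourier_coe, conj_fourier,
      hgconj]
  rw [← Complex.conj_eq_iff_im, congrFun (coe_eq_fourier_fourier_comp_neg (lowPass m g)) x,
    conj_fourier, hherm, neg_neg, ← Real.fourierInv_eq_fourier_comp_neg,
    Real.fourierInv_eq_fourier_neg]

theorem exists_schwartz_hasCompactSupport_fourier_approx {G : V → ℝ} (hG : ContDiff ℝ ∞ G)
    (hGc : HasCompactSupport G) {ε : ℝ≥0} (hε : 0 < ε) :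
    ∃ f : 𝓢(V, ℂ), (∀ x, (f x).im = 0) ∧ HasCompactSupport (𝓕 (f : V → ℂ)) ∧
      (∀ x, |(f x).re - G x| ≤ ε) ∧ LipschitzWith ε fun x => (f x).re - G x := by
  let g : 𝓢(V, ℂ) :=
    (hGc.comp_left (g := Complex.ofReal) Complex.ofReal_zero).toSchwartzMap
      (Complex.ofRealCLM.contDiff.comp hG)
  have hg : ∀ x, g x = G x := fun _ => rfl
  obtain ⟨m, hclose, hlip⟩ := ((eventually_norm_lowPass_sub_le g (NNReal.coe_pos.2 hε)).and
    (eventually_lipschitzWith_lowPass_sub g hε)).exists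
  have hre : ∀ x, (lowPass m g x).re - G x = (lowPass m g x - g x).re := fun x => by
    rw [Complex.sub_re, hg, Complex.ofReal_re]
  refine ⟨lowPass m g, im_lowPass_apply_eq_zero m fun x => by rw [hg, Complex.ofReal_im],
    hasCompactSupport_fourier_lowPass m g, fun x => ?_, ?_⟩
  · rw [hre]
    exact (Complex.abs_re_le_norm _).trans (hclose x)
  · simp only [hre]
    refine LipschitzWith.of_dist_le_mul fun x y => ?_
    rw [Real.dist_eq, ← Complex.sub_re, dist_eq_norm]
    exact (Complex.abs_re_le_norm _).trans (hlip.norm_sub_le x y)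

end RealValued

section Dilation

variable {V E : Type*} [NormedAddCommGroup V] [InnerProductSpace ℝ V] [FiniteDimensional ℝ V]
  [MeasurableSpace V] [BorelSpace V] [NormedAddCommGroup E] [NormedSpace ℂ E]

theorem fourier_comp_smul (f : V → E) {c : ℝ} (hc : c ≠ 0) :
    𝓕 (fun x => f (c • x)) = fun w => |(c ^ Module.finrank ℝ V)⁻¹| • 𝓕 f (c⁻¹ • w) := by
  funext w
  rw [Real.fourier_eq, Real.fourier_eq, ← Measure.integral_comp_smul]
  simp only [inner_smul_left, inner_smul_right, conj_trivial, inv_mul_cancel_left₀ hc]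

theorem tsupport_fourier_comp_smul_subset (f : V → E) {c : ℝ} (hc : c ≠ 0) :
    tsupport (𝓕 fun x => f (c • x)) ⊆ c • tsupport (𝓕 f) := by
  rw [fourier_comp_smul f hc]
  refine (tsupport_smul_subset_right _ _).trans ?_
  rw [← preimage_smul_inv₀ hc]
  exact tsupport_comp_subset_preimage (𝓕 f) (continuous_const_smul c⁻¹)

theorem exists_dilation_tsupport_fourier_subset {f : 𝓢(V, E)}
    (hf : HasCompactSupport (𝓕 (f : V → E))) {K : Set V} (hK : K ∈ 𝓝 0) :
    ∃ c : ℝ, 0 < c ∧ ∃ g : 𝓢(V, E), (∀ x, g x = f (c • x)) ∧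
      HasCompactSupport (𝓕 (g : V → E)) ∧ tsupport (𝓕 (g : V → E)) ⊆ K := by
  obtain ⟨r, hr, habs⟩ := (hf.isCompact.isVonNBounded ℝ hK).exists_pos
  have hsub : r⁻¹ • tsupport (𝓕 (f : V → E)) ⊆ K :=
    (subset_smul_set_iff₀ hr.ne').1 (habs r (le_abs_self r))
  let e : V ≃L[ℝ] V := .smulLeft (Units.mk0 r⁻¹ (inv_ne_zero hr.ne'))
  have htsupport := tsupport_fourier_comp_smul_subset f (inv_ne_zero hr.ne')
  exact ⟨r⁻¹, inv_pos.2 hr, SchwartzMap.compCLMOfContinuousLinearEquiv ℂ e f, fun _ => rfl,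
    (hf.isCompact.smul r⁻¹).of_isClosed_subset (isClosed_tsupport _) htsupport,
    htsupport.trans hsub⟩

end Dilation

section LipschitzPerturbation

variable {𝕜 E F : Type*} [RCLike 𝕜] [NormedAddCommGroup E] [NormedSpace 𝕜 E]
  [NormedAddCommGroup F] [NormedSpace 𝕜 F] {n : WithTop ℕ∞}

theorem approximatesLinearOn_id_add {u : E → E} {c : ℝ≥0} (hu : LipschitzWith c u) (s : Set E) :
    ApproximatesLinearOn (fun x => x + u x) (ContinuousLinearEquiv.refl 𝕜 E : E →L[𝕜] E) s c := by
  refine LipschitzOnWith.approximatesLinearOn ?_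
  convert hu.lipschitzOnWith (s := s)
  exact funext fun x => add_sub_cancel_left x (u x)

theorem exists_hasFDerivAt_equiv_id_add [CompleteSpace E] {u : E → E} {c : ℝ≥0}
    (hc : c < 1) (hlip : LipschitzWith c u) {x : E} (hu : DifferentiableAt 𝕜 u x) :
    ∃ D : E ≃L[𝕜] E, HasFDerivAt (fun x => x + u x) (D : E →L[𝕜] E) x := by
  have hsmall : ‖-fderiv 𝕜 u x‖ < 1 := by
    rw [norm_neg]
    exact (norm_fderiv_le_of_lipschitz 𝕜 hlip).trans_lt hc
  refine ⟨ContinuousLinearEquiv.unitsEquiv 𝕜 E (Units.oneSub _ hsmall), ?_⟩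
  have hD : 1 - -fderiv 𝕜 u x = ContinuousLinearMap.id 𝕜 E + fderiv 𝕜 u x := sub_neg_eq_add _ _
  exact ((hasFDerivAt_id x).add hu.hasFDerivAt).congr_fderiv hD.symm

theorem lipschitzWith_of_add_eq_zero {T : E × F → F} {L : ℝ≥0} (hL : L < 1)
    (hT : LipschitzWith L T) {s : E → F} (hs : ∀ x, s x + T (x, s x) = 0) : LipschitzWith L s := by
  refine LipschitzWith.of_dist_le_mul fun x y => ?_
  have hdist : dist (s x) (s y) ≤ L * max (dist x y) (dist (s x) (s y)) :=
    calc dist (s x) (s y) = dist (T (x, s x)) (T (y, s y)) := by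
          rw [← dist_neg_neg, neg_eq_of_add_eq_zero_right (hs x),
            neg_eq_of_add_eq_zero_right (hs y)]
      _ ≤ L * max (dist x y) (dist (s x) (s y)) := hT.dist_le_mul (x, s x) (y, s y)
  rcases le_total (dist (s x) (s y)) (dist x y) with h | h
  · rwa [max_eq_left h] at hdist
  · rw [max_eq_right h] at hdist
    have hzero : dist (s x) (s y) ≤ 0 := by
      have hL' : (L : ℝ) < 1 := hL
      nlinarith [hL', dist_nonneg (x := s x) (y := s y)]
    exact hzero.trans (by positivity)

theorem one_sub_mul_norm_le_of_add_eq_zero {h : F → F} {L : ℝ≥0} (hh : LipschitzWith L h) {t : F}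
    (ht : t + h t = 0) : (1 - L) * ‖t‖ ≤ ‖h 0‖ := by
  have hdiff : ‖h t - h 0‖ ≤ L * ‖t‖ := by simpa only [sub_zero] using hh.norm_sub_le t 0
  have ht' : ‖t‖ = ‖h t‖ := by rw [← norm_neg, neg_eq_of_add_eq_zero_right ht]
  linarith [norm_le_norm_sub_add (h t) (h 0)]

variable [CompleteSpace E]

theorem exists_contDiff_inverse_id_add {u : E → E} {c : ℝ≥0} (hc : c < 1)
    (hlip : LipschitzWith c u) (hu : ContDiff 𝕜 n u) (hn : n ≠ 0) :
    ∃ ψ : E → E, ContDiff 𝕜 n ψ ∧ Function.LeftInverse ψ (fun x => x + u x) ∧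
      Function.RightInverse ψ (fun x => x + u x) := by
  have hinv : Subsingleton E ∨
      c < ‖((ContinuousLinearEquiv.refl 𝕜 E).symm : E →L[𝕜] E)‖₊⁻¹ := by
    rcases subsingleton_or_nontrivial E with hE | hE
    · exact .inl hE
    · have hnorm : ‖((ContinuousLinearEquiv.refl 𝕜 E).symm : E →L[𝕜] E)‖₊ = 1 :=
        ContinuousLinearMap.nnnorm_id
      exact .inr (by rwa [hnorm, inv_one])
  let e : E ≃ₜ E := (approximatesLinearOn_id_add (𝕜 := 𝕜) hlip univ).toHomeomorph _ hinv
  choose D hD using fun x =>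
    exists_hasFDerivAt_equiv_id_add hc hlip (hu.differentiable hn x)
  exact ⟨e.symm, e.contDiff_symm hD (contDiff_id.add hu), e.symm_apply_apply, e.apply_symm_apply⟩

-- The equation is solved by inverting `(x, t) ↦ (x, t + T (x, t))` on the slice `t = 0`.
theorem exists_contDiff_add_eq_zero [CompleteSpace F] {T : E × F → F} {L : ℝ≥0} (hL : L < 1)
    (hlip : LipschitzWith L T) (hT : ContDiff 𝕜 n T) (hn : n ≠ 0) :
    ∃ s : E → F, ContDiff 𝕜 n s ∧ ∀ x, s x + T (x, s x) = 0 := by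
  have hlip₀ : LipschitzWith L fun p : E × F => ((0 : E), T p) := by
    simpa only [zero_max] using (LipschitzWith.const' (K := 0) (0 : E)).prodMk hlip
  obtain ⟨ψ, hψ, -, hright⟩ :=
    exists_contDiff_inverse_id_add hL hlip₀ ((contDiff_const (c := (0 : E))).prodMk hT) hn
  refine ⟨fun x => (ψ (x, 0)).2, contDiff_snd.comp (hψ.comp (contDiff_prodMk_left 0)), fun x => ?_⟩
  have hfst : (ψ (x, 0)).1 = x := by
    simpa only [Prod.fst_add, add_zero] using congrArg Prod.fst (hright (x, 0))
  have hψx : (x, (ψ (x, 0)).2) = ψ (x, 0) := Prod.ext hfst.symm rfl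
  rw [hψx]
  exact congrArg Prod.snd (hright (x, 0))

end LipschitzPerturbation

section Clamp

variable {E F H : Type*} [NormedAddCommGroup E] [NormedSpace ℝ E] [NormedAddCommGroup F]
  [NormedSpace ℝ F] [NormedAddCommGroup H] [NormedSpace ℝ H]

theorem exists_unit_clamp (F : Type*) [NormedAddCommGroup F] [NormedSpace ℝ F]
    [FiniteDimensional ℝ F] :
    ∃ κ : F → F, ContDiff ℝ ∞ κ ∧ HasCompactSupport κ ∧ (∀ s, ‖κ s‖ ≤ 2) ∧
      ∀ s, ‖s‖ ≤ 1 → κ s = s := by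
  let β : ContDiffBump (0 : F) := ⟨1, 2, one_pos, one_lt_two⟩
  refine ⟨fun s => β s • s, β.contDiff.smul contDiff_id, β.hasCompactSupport.smul_right,
    fun s => ?_, fun s hs => ?_⟩
  · rw [norm_smul, Real.norm_of_nonneg β.nonneg]
    rcases le_total 2 ‖s‖ with h | h
    · have hβ : β s = 0 := β.zero_of_le_dist (by rwa [dist_zero_right])
      simp only [hβ, zero_mul, zero_le_two]
    · exact (mul_le_of_le_one_left (norm_nonneg s) β.le_one).trans h
  · have hβ : β s = 1 := β.one_of_mem_closedBall (mem_closedBall_zero_iff.2 hs)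
    simp only [hβ, one_smul]

theorem lipschitzWith_smul_comp_inv_smul {f : E → F} {C : ℝ≥0} (hf : LipschitzWith C f) {δ : ℝ}
    (hδ : 0 < δ) : LipschitzWith C fun x => δ • f (δ⁻¹ • x) := by
  refine LipschitzWith.of_dist_le_mul fun x y => ?_
  calc dist (δ • f (δ⁻¹ • x)) (δ • f (δ⁻¹ • y)) ≤ δ * (C * (δ⁻¹ * dist x y)) := by
        rw [dist_smul₀, Real.norm_of_nonneg hδ.le]
        gcongr
        refine (hf.dist_le_mul _ _).trans_eq ?_
        rw [dist_smul₀, Real.norm_of_nonneg (inv_pos.2 hδ).le]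
    _ = C * dist x y := by field_simp

theorem exists_clamp (F : Type*) [NormedAddCommGroup F] [NormedSpace ℝ F]
    [FiniteDimensional ℝ F] :
    ∃ C : ℝ≥0, ∀ δ > 0, ∃ κ : F → F, ContDiff ℝ ∞ κ ∧ HasCompactSupport κ ∧ LipschitzWith C κ ∧
      (∀ s, ‖κ s‖ ≤ δ * 2) ∧ ∀ s, ‖s‖ ≤ δ → κ s = s := by
  obtain ⟨κ, hκ, hκc, hbound, hid⟩ := exists_unit_clamp F
  obtain ⟨C, hC⟩ := hκ.lipschitzWith_of_hasCompactSupport hκc (by simp)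
  refine ⟨C, fun δ hδ => ⟨fun s => δ • κ (δ⁻¹ • s), (hκ.comp (contDiff_const_smul _)).const_smul δ,
    (hκc.comp_smul (inv_ne_zero hδ.ne')).smul_left (f := fun _ => δ),
    lipschitzWith_smul_comp_inv_smul hC hδ, fun s => ?_, fun s hs => ?_⟩⟩
  · rw [norm_smul, Real.norm_of_nonneg hδ.le]
    gcongr
    exact hbound _
  · have hs' : ‖δ⁻¹ • s‖ ≤ 1 := by
      rwa [norm_smul, norm_inv, Real.norm_of_nonneg hδ.le, inv_mul_le_iff₀ hδ, mul_one]
    simp only [hid _ hs', smul_inv_smul₀ hδ.ne']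

theorem exists_lipschitzOnWith_of_fderiv_eq_zero {R : E × F → H} (hR : ContDiff ℝ 1 R) {C : Set E}
    (hC : IsCompact C) (hRC : ∀ x ∉ C, ∀ s, R (x, s) = 0) (hR' : ∀ x, fderiv ℝ R (x, 0) = 0)
    {η : ℝ≥0} (hη : 0 < η) :
    ∃ δ > 0, LipschitzOnWith η R (univ ×ˢ closedBall 0 δ) := by
  have hopen : IsOpen {p | ‖fderiv ℝ R p‖₊ < η} :=
    isOpen_lt (hR.continuous_fderiv one_ne_zero).nnnorm continuous_const
  have hzero : C ×ˢ {0} ⊆ {p | ‖fderiv ℝ R p‖₊ < η} := by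
    rintro ⟨x, _⟩ ⟨-, rfl⟩
    rwa [mem_ofPred_eq, hR', nnnorm_zero]
  obtain ⟨U, V, -, hV, hCU, h0V, hUV⟩ :=
    generalized_tube_lemma hC isCompact_singleton hopen hzero
  obtain ⟨δ, hδ, hδV⟩ := nhds_basis_closedBall.mem_iff.1 (hV.mem_nhds (h0V rfl))
  refine ⟨δ, hδ, (convex_univ.prod (convex_closedBall 0 δ)).lipschitzOnWith_of_nnnorm_fderiv_le
    (𝕜 := ℝ) (fun p _ => hR.differentiable one_ne_zero p) ?_⟩
  rintro ⟨x, s⟩ ⟨-, hs⟩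
  by_cases hx : x ∈ C
  · exact (hUV ⟨hCU hx, hδV hs⟩).le
  · have hlocal : R =ᶠ[𝓝 (x, s)] fun _ => 0 := by
      filter_upwards [continuous_fst.continuousAt.eventually_mem
        (hC.isClosed.isOpen_compl.mem_nhds hx)] with p hp using hRC p.1 hp p.2
    rw [hlocal.fderiv_eq, fderiv_const_apply, nnnorm_zero]
    exact zero_le

theorem exists_clamp_lipschitzWith [FiniteDimensional ℝ F] {R : E × F → H} (hR : ContDiff ℝ 1 R)
    {C : Set E} (hC : IsCompact C) (hRC : ∀ x ∉ C, ∀ s, R (x, s) = 0)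
    (hR' : ∀ x, fderiv ℝ R (x, 0) = 0) {η : ℝ≥0} (hη : 0 < η) :
    ∃ δ > 0, ∃ κ : F → F, ContDiff ℝ ∞ κ ∧ HasCompactSupport κ ∧ (∀ s, ‖s‖ ≤ δ → κ s = s) ∧
      LipschitzWith η fun p : E × F => R (p.1, κ p.2) := by
  obtain ⟨M, hclamp⟩ := exists_clamp F
  have hM : 0 < max 1 M := zero_lt_one.trans_le (le_max_left 1 M)
  obtain ⟨δ, hδ, hlip⟩ :=
    exists_lipschitzOnWith_of_fderiv_eq_zero hR hC hRC hR' (div_pos hη hM)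
  obtain ⟨κ, hκ, hκc, hκlip, hκδ, hκid⟩ := hclamp (δ / 2) (half_pos hδ)
  rw [div_mul_cancel₀ δ two_ne_zero] at hκδ
  refine ⟨δ / 2, half_pos hδ, κ, hκ, hκc, hκid, ?_⟩
  have hq : LipschitzWith (max 1 M) fun p : E × F => (p.1, κ p.2) := by
    simpa only [mul_one, Function.comp_apply] using
      LipschitzWith.prod_fst.prodMk (hκlip.comp LipschitzWith.prod_snd)
  have hcomp := hlip.comp hq.lipschitzOnWith (s := univ)
    fun p _ => ⟨mem_univ _, mem_closedBall_zero_iff.2 (hκδ p.2)⟩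
  rwa [lipschitzOnWith_univ, div_mul_cancel₀ η hM.ne'] at hcomp

end Clamp

section DirectionalRemainder

variable {V H : Type*} [NormedAddCommGroup V] [NormedSpace ℝ V] [NormedAddCommGroup H]
  [NormedSpace ℝ H]

/-- The first-order Taylor remainder of `G` at `x` along the vector field `ν`, as a function of the
pair `(x, s)`, where the displacement of `x` is `s • ν x`. -/
def directionalRemainder (G : V → H) (ν : V → V) (p : V × ℝ) : H :=
  G (p.1 + p.2 • ν p.1) - G p.1 - p.2 • fderiv ℝ G p.1 (ν p.1)

variable {G : V → H} {ν : V → V}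

theorem directionalRemainder_eq_zero {x : V} (hx : ν x = 0) (s : ℝ) :
    directionalRemainder G ν (x, s) = 0 := by
  simp only [directionalRemainder, hx, smul_zero, add_zero, sub_self, map_zero]

theorem directionalRemainder_zero (x : V) : directionalRemainder G ν (x, 0) = 0 := by
  simp only [directionalRemainder, zero_smul, add_zero, sub_self]

theorem contDiff_directionalRemainder (hG : ContDiff ℝ ∞ G) (hν : ContDiff ℝ ∞ ν) :
    ContDiff ℝ ∞ (directionalRemainder G ν) := by
  have hline : ContDiff ℝ ∞ fun p : V × ℝ => p.1 + p.2 • ν p.1 :=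
    contDiff_fst.add (contDiff_snd.smul (hν.comp contDiff_fst))
  have hlin : ContDiff ℝ ∞ fun x => fderiv ℝ G x (ν x) :=
    (hG.fderiv_right (by simp)).clm_apply hν
  exact ((hG.comp hline).sub (hG.comp contDiff_fst)).sub
    (contDiff_snd.smul (hlin.comp contDiff_fst))

theorem hasFDerivAt_directionalRemainder {x : V} (hG : DifferentiableAt ℝ G x)
    (hν : DifferentiableAt ℝ ν x) (hGν : DifferentiableAt ℝ (fun y => fderiv ℝ G y (ν y)) x) :
    HasFDerivAt (directionalRemainder G ν) (0 : V × ℝ →L[ℝ] H) (x, 0) := by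
  have hfst : HasFDerivAt Prod.fst (ContinuousLinearMap.fst ℝ V ℝ) (x, (0 : ℝ)) := hasFDerivAt_fst
  have hsnd : HasFDerivAt Prod.snd (ContinuousLinearMap.snd ℝ V ℝ) (x, (0 : ℝ)) := hasFDerivAt_snd
  have hline := hfst.add (hsnd.smul (hν.hasFDerivAt.comp (x, (0 : ℝ)) hfst))
  have hG₀ : HasFDerivAt G (fderiv ℝ G x) (x + (0 : ℝ) • ν x) := by
    rw [zero_smul, add_zero]
    exact hG.hasFDerivAt
  have hsum := ((hG₀.comp (x, (0 : ℝ)) hline).sub (hG.hasFDerivAt.comp (x, (0 : ℝ)) hfst)).sub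
    (hsnd.smul (hGν.hasFDerivAt.comp (x, (0 : ℝ)) hfst))
  refine hsum.congr_fderiv (ContinuousLinearMap.ext fun v => ?_)
  simp

end DirectionalRemainder

section NonzeroDerivative

variable {V : Type*} [NormedAddCommGroup V] [NormedSpace ℝ V]

theorem not_hasDerivAt_zero_id_add {h : ℝ → ℝ} {L : ℝ≥0} (hL : L < 1) (hh : LipschitzWith L h)
    (t : ℝ) : ¬ HasDerivAt (fun t => t + h t) 0 t := fun hderiv => by
  have hh' : HasDerivAt h (-1) t := by
    simpa only [Pi.sub_def, id, add_sub_cancel_left, zero_sub] using hderiv.sub (hasDerivAt_id t)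
  have hbound := norm_deriv_le_of_lipschitz (x₀ := t) hh
  rw [hh'.deriv, norm_neg, norm_one] at hbound
  exact hL.not_ge hbound

theorem fderiv_ne_zero_of_eventuallyEq_id_add {F : V → ℝ} {x v : V} {t : ℝ} {h : ℝ → ℝ} {L : ℝ≥0}
    (hF : DifferentiableAt ℝ F (x + t • v)) (hL : L < 1) (hh : LipschitzWith L h)
    (heq : (fun r => r + h r) =ᶠ[𝓝 t] fun r => F (x + r • v)) : fderiv ℝ F (x + t • v) ≠ 0 := by
  intro hzero
  have hline : HasDerivAt (fun r : ℝ => x + r • v) v t := by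
    simpa only [id, one_smul] using ((hasDerivAt_id t).smul_const v).const_add x
  have hF' : HasFDerivAt F (0 : V →L[ℝ] ℝ) (x + t • v) := hzero ▸ hF.hasFDerivAt
  have hderiv : HasDerivAt (fun r => F (x + r • v)) 0 t :=
    (hF'.comp_hasDerivAt t hline).congr_deriv rfl
  exact not_hasDerivAt_zero_id_add hL hh t (hderiv.congr_of_eventuallyEq heq)

end NonzeroDerivative

section VanishesTransversally

variable {V W F : Type*} [NormedAddCommGroup V] [NormedSpace ℝ V] [NormedAddCommGroup W]
  [NormedSpace ℝ W] [NormedAddCommGroup F] [NormedSpace ℝ F]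

/-- `f` vanishes at every point of `S`, with nonzero derivative. For a function with values in `ℝ`,
or in a real line, this says that `f` vanishes transversally along `S`. -/
def VanishesTransversallyOn (f : V → F) (S : Set V) : Prop :=
  ∀ x ∈ S, f x = 0 ∧ fderiv ℝ f x ≠ 0

namespace VanishesTransversallyOn

theorem image_of_leftInverse {f : V → F} {S : Set V} (h : VanishesTransversallyOn f S) {φ : V → W}
    {ψ : W → V} (hφ : Differentiable ℝ φ) (hψ : Differentiable ℝ ψ) (hf : Differentiable ℝ f)
    (hleft : Function.LeftInverse ψ φ) : VanishesTransversallyOn (f ∘ ψ) (φ '' S) := by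
  rintro _ ⟨x, hx, rfl⟩
  refine ⟨by rw [Function.comp_apply, hleft, (h x hx).1], fun hzero => (h x hx).2 ?_⟩
  have hf' : f = (f ∘ ψ) ∘ φ := by rw [Function.comp_assoc, hleft.comp_eq_id, Function.comp_id]
  rw [hf', fderiv_comp x (hf.comp hψ _) (hφ x), hzero, ContinuousLinearMap.zero_comp]

theorem of_re {f : V → ℂ} {S : Set V} (hf : Differentiable ℝ f) (him : ∀ x, (f x).im = 0)
    (h : VanishesTransversallyOn (fun x => (f x).re) S) : VanishesTransversallyOn f S := by
  refine fun x hx => ⟨Complex.ext (h x hx).1 (him x), fun hzero => (h x hx).2 ?_⟩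
  have hre : HasFDerivAt (fun y => (f y).re) (Complex.reCLM.comp (fderiv ℝ f x)) x :=
    Complex.reCLM.hasFDerivAt.comp x (hf x).hasFDerivAt
  rw [hre.fderiv, hzero, ContinuousLinearMap.comp_zero]

end VanishesTransversallyOn

end VanishesTransversally

section LipschitzSmul

variable {V F : Type*} [PseudoMetricSpace V] [SeminormedAddCommGroup F] [NormedSpace ℝ F]

theorem lipschitzWith_smul_of_norm_le {s : V → ℝ} {ν : V → F} {Ks Kν A B : ℝ≥0}
    (hs : LipschitzWith Ks s) (hν : LipschitzWith Kν ν) (hsA : ∀ x, ‖s x‖ ≤ A)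
    (hνB : ∀ x, ‖ν x‖ ≤ B) : LipschitzWith (A * Kν + Ks * B) fun x => s x • ν x := by
  refine LipschitzWith.of_dist_le_mul fun x y => ?_
  have hsplit : s x • ν x - s y • ν y = s x • (ν x - ν y) + (s x - s y) • ν y := by
    rw [smul_sub, sub_smul, sub_add_sub_cancel]
  calc dist (s x • ν x) (s y • ν y) ≤ ‖s x‖ * dist (ν x) (ν y) + dist (s x) (s y) * ‖ν y‖ := by
        rw [dist_eq_norm, hsplit, dist_eq_norm, dist_eq_norm, ← norm_smul, ← norm_smul]
        exact norm_add_le _ _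
    _ ≤ A * (Kν * dist x y) + Ks * dist x y * B := by
        gcongr
        exacts [hsA x, hν.dist_le_mul x y, hs.dist_le_mul x y, hνB y]
    _ = (A * Kν + Ks * B : ℝ≥0) * dist x y := by push_cast; ring

end LipschitzSmul

section Stability

variable {V : Type*} [NormedAddCommGroup V] [NormedSpace ℝ V]

theorem exists_lipschitzWith_add_smul {κ : ℝ → ℝ} {ν : V → V} (hκ : ContDiff ℝ ∞ κ)
    (hκc : HasCompactSupport κ) (hν : ContDiff ℝ ∞ ν) (hνc : HasCompactSupport ν) :
    ∃ M, LipschitzWith M fun p : V × ℝ => p.1 + κ p.2 • ν p.1 := by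
  have hsupp : HasCompactSupport fun p : V × ℝ => κ p.2 • ν p.1 := by
    refine HasCompactSupport.intro (hνc.isCompact.prod hκc.isCompact) fun p hp => ?_
    rcases not_and_or.1 hp with h | h
    · rw [image_eq_zero_of_notMem_tsupport h, smul_zero]
    · rw [image_eq_zero_of_notMem_tsupport h, zero_smul]
  have hsmooth : ContDiff ℝ ∞ fun p : V × ℝ => κ p.2 • ν p.1 :=
    (hκ.comp contDiff_snd).smul (hν.comp contDiff_fst)
  obtain ⟨M, hM⟩ := hsmooth.lipschitzWith_of_hasCompactSupport hsupp (by simp)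
  exact ⟨1 + M, LipschitzWith.prod_fst.add hM⟩

-- For `x ∈ S`, `T (x, t)` is the defect `F (x + t • ν x) - t`, with `t` clamped so that it becomes
-- globally Lipschitz: its part coming from `G` is a Taylor remainder, small for small `t`, and its
-- part coming from `F - G` is small by assumption.
theorem exists_lipschitzWith_defect {G : V → ℝ} {ν : V → V} (hG : ContDiff ℝ ∞ G)
    (hν : ContDiff ℝ ∞ ν) (hνc : HasCompactSupport ν) {S : Set V}
    (hS : ∀ x ∈ S, G x = 0 ∧ fderiv ℝ G x (ν x) = 1) {L : ℝ≥0} (hL : 0 < L) :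
    ∃ δ > 0, ∃ ε : ℝ≥0, 0 < ε ∧ ∀ F : V → ℝ, ContDiff ℝ ∞ F →
      LipschitzWith ε (fun x => F x - G x) →
      ∃ T : V × ℝ → ℝ, ContDiff ℝ ∞ T ∧ LipschitzWith L T ∧ (∀ x, T (x, 0) = F x - G x) ∧
        ∀ x ∈ S, ∀ t, ‖t‖ ≤ δ → t + T (x, t) = F (x + t • ν x) := by
  have hR : ContDiff ℝ ∞ (directionalRemainder G ν) := contDiff_directionalRemainder hG hν
  have hGν : ContDiff ℝ ∞ fun x => fderiv ℝ G x (ν x) := (hG.fderiv_right (by simp)).clm_apply hν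
  obtain ⟨δ, hδ, κ, hκ, hκc, hκid, hRκ⟩ := exists_clamp_lipschitzWith (hR.of_le (by simp)) hνc
    (fun x hx => directionalRemainder_eq_zero (image_eq_zero_of_notMem_tsupport hx))
    (fun x => (hasFDerivAt_directionalRemainder (hG.differentiable (by simp) x)
      (hν.differentiable (by simp) x) (hGν.differentiable (by simp) x)).fderiv) (half_pos hL)
  obtain ⟨M, hM⟩ := exists_lipschitzWith_add_smul hκ hκc hν hνc
  have hκ₀ : κ 0 = 0 := hκid 0 (by simpa using hδ.le)
  refine ⟨δ, hδ, L / 2 / (M + 1), by positivity, fun F hF hFG => ?_⟩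
  refine ⟨fun p => directionalRemainder G ν (p.1, κ p.2) +
    (F (p.1 + κ p.2 • ν p.1) - G (p.1 + κ p.2 • ν p.1)), ?_, ?_, fun x => ?_, fun x hx t ht => ?_⟩
  · have hline : ContDiff ℝ ∞ fun p : V × ℝ => p.1 + κ p.2 • ν p.1 :=
      contDiff_fst.add ((hκ.comp contDiff_snd).smul (hν.comp contDiff_fst))
    exact (hR.comp (contDiff_fst.prodMk (hκ.comp contDiff_snd))).add ((hF.sub hG).comp hline)
  · have hFGκ := (hFG.comp hM).weaken (K' := L / 2) <|
      calc L / 2 / (M + 1) * M ≤ L / 2 / (M + 1) * (M + 1) := by gcongr; exact le_self_add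
        _ = L / 2 := div_mul_cancel₀ _ (by positivity)
    simpa only [add_halves, Function.comp_def] using hRκ.add hFGκ
  · simp only [hκ₀, directionalRemainder_zero, zero_smul, add_zero, zero_add]
  · simp only [directionalRemainder, hκid t ht, (hS x hx).1, (hS x hx).2, smul_eq_mul]
    ring

variable [CompleteSpace V]

theorem lipschitzWith_prodMk_left {α β γ : Type*} [PseudoEMetricSpace α] [PseudoEMetricSpace β]
    [PseudoEMetricSpace γ] {T : α × β → γ} {L : ℝ≥0} (hT : LipschitzWith L T) (a : α) :
    LipschitzWith L fun b => T (a, b) := by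
  simpa only [mul_one, Function.comp_def] using hT.comp (LipschitzWith.prodMk_left a)

theorem exists_norm_le_add_eq_zero {T : V × ℝ → ℝ} {L : ℝ≥0} (hL : L ≤ 1 / 2)
    (hlip : LipschitzWith L T) (hT : ContDiff ℝ ∞ T) {δ : ℝ} (hT₀ : ∀ x, ‖T (x, 0)‖ ≤ δ / 2) :
    ∃ s : V → ℝ, ContDiff ℝ ∞ s ∧ LipschitzWith L s ∧ (∀ x, ‖s x‖ ≤ δ) ∧
      ∀ x, s x + T (x, s x) = 0 := by
  have hL_lt : L < 1 := hL.trans_lt (by norm_num)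
  obtain ⟨s, hs, hsT⟩ := exists_contDiff_add_eq_zero hL_lt hlip hT (by simp)
  refine ⟨s, hs, lipschitzWith_of_add_eq_zero hL_lt hlip hsT, fun x => ?_, hsT⟩
  have hbound :=
    (one_sub_mul_norm_le_of_add_eq_zero (lipschitzWith_prodMk_left hlip x) (hsT x)).trans (hT₀ x)
  have hL' : (L : ℝ) ≤ 1 / 2 := by exact_mod_cast hL
  nlinarith [hL', norm_nonneg (s x)]

theorem exists_stable_displacement {G : V → ℝ} {ν : V → V} (hG : ContDiff ℝ ∞ G)
    (hν : ContDiff ℝ ∞ ν) (hνc : HasCompactSupport ν) {S : Set V}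
    (hS : ∀ x ∈ S, G x = 0 ∧ fderiv ℝ G x (ν x) = 1) {c : ℝ≥0} (hc : 0 < c) :
    ∃ ε : ℝ≥0, 0 < ε ∧ ∀ F : V → ℝ, ContDiff ℝ ∞ F → (∀ x, |F x - G x| ≤ ε) →
      LipschitzWith ε (fun x => F x - G x) →
      ∃ u : V → V, ContDiff ℝ ∞ u ∧ LipschitzWith c u ∧
        VanishesTransversallyOn F ((fun x => x + u x) '' S) := by
  obtain ⟨B, hB⟩ := hν.lipschitzWith_of_hasCompactSupport hνc (by simp)
  obtain ⟨A, hA⟩ := hνc.exists_bound_of_continuous hν.continuous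
  have hA' (x : V) : ‖ν x‖ ≤ A.toNNReal := (hA x).trans (Real.le_coe_toNNReal A)
  obtain ⟨L, hL, hL_half, hLc⟩ : ∃ L : ℝ≥0, 0 < L ∧ L ≤ 1 / 2 ∧ L * B + L * A.toNNReal ≤ c := by
    refine ⟨min (1 / 2) (c / (B + A.toNNReal + 1)), by positivity, min_le_left _ _, ?_⟩
    rw [← mul_add]
    exact (mul_le_mul' (min_le_right _ _) le_self_add).trans_eq
      (div_mul_cancel₀ _ (by positivity))
  obtain ⟨δ, hδ, ε, hε, hdefect⟩ := exists_lipschitzWith_defect hG hν hνc hS hL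
  obtain ⟨η, hη, hηL, hηδ⟩ : ∃ η : ℝ≥0, 0 < η ∧ η ≤ L ∧ η < δ :=
    (exists_between (lt_min hL (Real.toNNReal_pos.2 hδ))).imp fun η hη =>
      ⟨hη.1, (hη.2.trans_le (min_le_left _ _)).le,
        Real.lt_toNNReal_iff_coe_lt.1 (hη.2.trans_le (min_le_right _ _))⟩
  refine ⟨min ε (η / 2), lt_min hε (half_pos hη), fun F hF hclose hlip => ?_⟩
  obtain ⟨T, hT, hTlip, hT₀, hTS⟩ := hdefect F hF (hlip.weaken (min_le_left _ _))
  have hTη (x : V) : ‖T (x, 0)‖ ≤ η / 2 := by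
    rw [hT₀]
    exact (hclose x).trans (NNReal.coe_le_coe.2 (min_le_right _ _))
  obtain ⟨s, hs, hsL, hsη, hsT⟩ := exists_norm_le_add_eq_zero hL_half hTlip hT hTη
  refine ⟨fun x => s x • ν x, hs.smul hν, (lipschitzWith_smul_of_norm_le hsL hB
    (fun x => (hsη x).trans hηL) hA').weaken hLc, ?_⟩
  rintro _ ⟨x, hx, rfl⟩
  have hsδ : ‖s x‖ < δ := (hsη x).trans_lt hηδ
  refine ⟨(hTS x hx _ hsδ.le).symm.trans (hsT x), ?_⟩
  refine fderiv_ne_zero_of_eventuallyEq_id_add (hF.differentiable (by simp) _)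
    (hL_half.trans_lt (by norm_num)) (lipschitzWith_prodMk_left hTlip x) ?_
  filter_upwards [continuous_norm.continuousAt.eventually_lt_const hsδ] with t ht
  exact hTS x hx t ht.le

end Stability
section NormalField

variable {V : Type*} [NormedAddCommGroup V] [InnerProductSpace ℝ V]

theorem fderiv_apply_gradient [CompleteSpace V] (g : V → ℝ) (x : V) :
    fderiv ℝ g x (gradient g x) = ‖gradient g x‖ ^ 2 := by
  rw [← real_inner_self_eq_norm_sq]
  exact InnerProductSpace.toDual_symm_apply.symm

theorem contDiff_gradient [CompleteSpace V] {g : V → ℝ} {m n : WithTop ℕ∞} (hg : ContDiff ℝ n g)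
    (hmn : m + 1 ≤ n) : ContDiff ℝ m (gradient g) :=
  (InnerProductSpace.toDual ℝ V).symm.toContinuousLinearEquiv.contDiff.comp
    (hg.fderiv_right hmn)

theorem exists_contDiff_fderiv_apply_eq_one [CompleteSpace V] {g : V → ℝ} (hg : ContDiff ℝ ∞ g)
    (hreg : VanishesTransversallyOn g (g ⁻¹' {0})) :
    ∃ ν : V → V, ContDiff ℝ ∞ ν ∧ ∀ x, g x = 0 → fderiv ℝ g x (ν x) = 1 := by
  have hgrad : ContDiff ℝ ∞ (gradient g) := contDiff_gradient hg (by simp)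
  have hgrad_ne (x : V) (hx : g x = 0) : ‖gradient g x‖ ^ 2 ≠ 0 := by
    have hne : gradient g x ≠ 0 :=
      (InnerProductSpace.toDual ℝ V).symm.map_ne_zero_iff.2 (hreg x hx).2
    positivity
  have hden (x : V) : ‖gradient g x‖ ^ 2 + g x ^ 2 ≠ 0 := by
    by_cases hx : g x = 0
    · simpa only [hx, ne_eq, two_ne_zero, not_false_iff, zero_pow, add_zero] using hgrad_ne x hx
    · positivity
  -- Adding `g x ^ 2` to the denominator keeps it nonzero everywhere without changing it on the
  -- zero set.
  refine ⟨fun x => (‖gradient g x‖ ^ 2 + g x ^ 2)⁻¹ • gradient g x,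
    (((hgrad.norm_sq ℝ).add (hg.pow 2)).inv hden).smul hgrad, fun x hx => ?_⟩
  rw [map_smul, fderiv_apply_gradient, hx, zero_pow two_ne_zero, add_zero, smul_eq_mul,
    inv_mul_cancel₀ (hgrad_ne x hx)]

variable [FiniteDimensional ℝ V]

theorem exists_contDiff_hasCompactSupport_eventuallyEq_one {S : Set V} (hS : IsCompact S) :
    ∃ χ : V → ℝ, ContDiff ℝ ∞ χ ∧ HasCompactSupport χ ∧ ∀ x ∈ S, χ =ᶠ[𝓝 x] 1 := by
  obtain ⟨r, hr, hSr⟩ := hS.isBounded.subset_ball_lt 0 0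
  let χ : ContDiffBump (0 : V) := ⟨r, r + 1, hr, lt_add_one r⟩
  exact ⟨χ, χ.contDiff, χ.hasCompactSupport, fun x hx => χ.eventuallyEq_one_of_mem_ball (hSr hx)⟩

theorem exists_hasCompactSupport_transverse_field {g : V → ℝ} (hg : ContDiff ℝ ∞ g)
    (hreg : VanishesTransversallyOn g (g ⁻¹' {0})) (hc : IsCompact (g ⁻¹' {0})) :
    ∃ (G : V → ℝ) (ν : V → V), ContDiff ℝ ∞ G ∧ HasCompactSupport G ∧ ContDiff ℝ ∞ ν ∧
      HasCompactSupport ν ∧ ∀ x ∈ g ⁻¹' {0}, G x = 0 ∧ fderiv ℝ G x (ν x) = 1 := by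
  obtain ⟨ν, hν, hgν⟩ := exists_contDiff_fderiv_apply_eq_one hg hreg
  obtain ⟨χ, hχ, hχc, hχ_one⟩ := exists_contDiff_hasCompactSupport_eventuallyEq_one hc
  refine ⟨fun x => χ x * g x, fun x => χ x • ν x, hχ.mul hg, hχc.mul_right, hχ.smul hν,
    hχc.smul_right, fun x hx => ⟨mul_eq_zero_of_right _ hx, ?_⟩⟩
  have hlocal : (fun y => χ y * g y) =ᶠ[𝓝 x] g :=
    (hχ_one x hx).mono fun y hy => by simp only [hy, Pi.one_apply, one_mul]
  simp only [hlocal.fderiv_eq, (hχ_one x hx).eq_of_nhds, Pi.one_apply, one_smul, hgν x hx]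

end NormalField

section Isotopy

variable {n : ℕ}

namespace IsDiffeo

theorem comp {φ₁ φ₂ : En n → En n} (h₁ : IsDiffeo φ₁) (h₂ : IsDiffeo φ₂) :
    IsDiffeo (φ₁ ∘ φ₂) := by
  obtain ⟨ψ₁, hφ₁, hψ₁, hleft₁, hright₁⟩ := h₁
  obtain ⟨ψ₂, hφ₂, hψ₂, hleft₂, hright₂⟩ := h₂
  exact ⟨ψ₂ ∘ ψ₁, hφ₁.comp hφ₂, hψ₂.comp hψ₁, hleft₁.comp hleft₂, hright₁.comp hright₂⟩

theorem const_smul {a : ℝ} (ha : a ≠ 0) : IsDiffeo fun x : En n => a • x :=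
  ⟨fun x => a⁻¹ • x, contDiff_const_smul a, contDiff_const_smul a⁻¹, inv_smul_smul₀ ha,
    smul_inv_smul₀ ha⟩

theorem id_add {u : En n → En n} {c : ℝ≥0} (hc : c < 1) (hlip : LipschitzWith c u)
    (hu : ContDiff ℝ ∞ u) : IsDiffeo fun x => x + u x := by
  obtain ⟨ψ, hψ, hleft, hright⟩ := exists_contDiff_inverse_id_add hc hlip hu (by simp)
  exact ⟨ψ, contDiff_id.add hu, hψ, hleft, hright⟩

end IsDiffeo

theorem IsClosedHypersurface.image {S : Set (En n)} (hS : IsClosedHypersurface S)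
    {φ : En n → En n} (hφ : IsDiffeo φ) : IsClosedHypersurface (φ '' S) := by
  obtain ⟨ψ, hφ, hψ, hleft, hright⟩ := hφ
  obtain ⟨hc, g, hg, rfl, hreg⟩ := hS
  have htrans : VanishesTransversallyOn g (g ⁻¹' {0}) := fun x hx => ⟨hx, hreg x hx⟩
  refine ⟨hc.image hφ.continuous, g ∘ ψ, hg.comp hψ, ?_, fun y hy => ?_⟩
  · rw [image_eq_preimage_of_inverse hleft hright, preimage_comp]
  · exact (htrans.image_of_leftInverse (hφ.differentiable (by simp)) (hψ.differentiable (by simp))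
      (hg.differentiable (by simp)) hleft y hy).2

theorem Isotopic.image_smul_id_add {u : En n → En n} {c : ℝ≥0} (hc : c < 1)
    (hlip : LipschitzWith c u) (hu : ContDiff ℝ ∞ u) {a : ℝ} (ha : 0 < a) (S : Set (En n)) :
    Isotopic S ((fun x => a • (x + u x)) '' S) := by
  refine ⟨fun t x => (1 + t * (a - 1)) • (x + t • u x), ?_, fun t ht => ?_, ?_, ?_⟩
  · have := hu.continuous
    fun_prop
  · have hscale : 0 < 1 + t * (a - 1) := by
      rcases le_total a 1 with h | h
      · nlinarith [ht.2]
      · nlinarith [ht.1]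
    have hlip_t : LipschitzWith c fun x => t • u x := by
      refine LipschitzWith.of_dist_le_mul fun x y => ?_
      rw [dist_smul₀, Real.norm_of_nonneg ht.1]
      exact (mul_le_of_le_one_left dist_nonneg ht.2).trans (hlip.dist_le_mul x y)
    exact (IsDiffeo.const_smul hscale.ne').comp (.id_add hc hlip_t (hu.const_smul t))
  · funext x
    simp only [zero_mul, add_zero, zero_smul, one_smul, id]
  · simp only [one_mul, one_smul, add_sub_cancel]

end Isotopy

theorem exists_bandlimited_vanishesTransversallyOn_displacement {V : Type*}
    [NormedAddCommGroup V] [InnerProductSpace ℝ V] [FiniteDimensional ℝ V] [MeasurableSpace V]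
    [BorelSpace V] {g : V → ℝ} (hg : ContDiff ℝ ∞ g)
    (hreg : VanishesTransversallyOn g (g ⁻¹' {0})) (hc : IsCompact (g ⁻¹' {0})) {c : ℝ≥0}
    (hc₀ : 0 < c) :
    ∃ (f : 𝓢(V, ℂ)) (u : V → V), (∀ x, (f x).im = 0) ∧ HasCompactSupport (𝓕 (f : V → ℂ)) ∧
      ContDiff ℝ ∞ u ∧ LipschitzWith c u ∧
        VanishesTransversallyOn f ((fun x => x + u x) '' (g ⁻¹' {0})) := by
  obtain ⟨G, ν, hG, hGc, hν, hνc, hGν⟩ := exists_hasCompactSupport_transverse_field hg hreg hc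
  obtain ⟨ε, hε, hstable⟩ := exists_stable_displacement hG hν hνc hGν hc₀
  obtain ⟨f, him, hfc, hclose, hlip⟩ := exists_schwartz_hasCompactSupport_fourier_approx hG hGc hε
  obtain ⟨u, hu, hulip, hvanish⟩ :=
    hstable (fun x => (f x).re) (Complex.reCLM.contDiff.comp (f.smooth ⊤)) hclose hlip
  exact ⟨f, u, him, hfc, hu, hulip, .of_re f.differentiable him hvanish⟩

theorem stmt1_general {n : ℕ} (S : Set (En n)) (hS : IsClosedHypersurface S)
    (K : Set (En n)) (hK : K ∈ 𝓝 0) :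
    ∃ (S' : Set (En n)) (f : SchwartzMap (En n) ℂ),
      IsClosedHypersurface S' ∧ Isotopic S S' ∧
      (∀ x, (f x).im = 0) ∧
      HasCompactSupport (𝓕 (f : En n → ℂ)) ∧
      tsupport (𝓕 (f : En n → ℂ)) ⊆ K ∧
      (∀ x ∈ S', f x = 0 ∧ fderiv ℝ (f : En n → ℂ) x ≠ 0) := by
  obtain ⟨hc, g, hg, rfl, hreg⟩ := id hS
  obtain ⟨f, u, him, hfc, hu, hlip, hvanish⟩ :=
    exists_bandlimited_vanishesTransversallyOn_displacement (c := 1 / 2) hg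
      (fun x hx => ⟨hx, hreg x hx⟩) hc (by positivity)
  have hlt : (1 / 2 : ℝ≥0) < 1 := by norm_num
  obtain ⟨c, hc₀, F, hF, hFc, hFK⟩ := exists_dilation_tsupport_fourier_subset hfc hK
  have hdil : (F : En n → ℂ) = f ∘ (c • ·) := funext hF
  refine ⟨(fun x => c⁻¹ • (x + u x)) '' (g ⁻¹' {0}), F,
    hS.image ((IsDiffeo.const_smul (inv_pos.2 hc₀).ne').comp (.id_add hlt hlip hu)),
    .image_smul_id_add hlt hlip hu (inv_pos.2 hc₀) _, fun x => by rw [hF, him], hFc, hFK, ?_⟩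
  rw [← image_image (c⁻¹ • ·) (fun x => x + u x), hdil]
  exact hvanish.image_of_leftInverse (by fun_prop) (by fun_prop) f.differentiable
    (smul_inv_smul₀ hc₀.ne')

/-- Given a closed hypersurface `Σ` of `ℝⁿ` and a bounded measurable `K ⊆ ℝⁿ`,
symmetric about the origin and containing the origin in its interior, there is a hypersurface
`Σ'` isotopic to `Σ` and a real-valued Schwartz function `f` whose Fourier transform has
compact support contained in `K`, vanishing transversally along `Σ'`. -/
theorem stmt1 {n : ℕ} (S : Set (En n)) (hS : IsClosedHypersurface S)
    (K : Set (En n)) (hKb : Bornology.IsBounded K) (hKm : MeasurableSet K)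
    (hsym : ∀ ξ ∈ K, -ξ ∈ K) (h0 : (0 : En n) ∈ interior K) :
    ∃ (S' : Set (En n)) (f : SchwartzMap (En n) ℂ),
      IsClosedHypersurface S' ∧ Isotopic S S' ∧
      (∀ x, (f x).im = 0) ∧
      HasCompactSupport (𝓕 (f : En n → ℂ)) ∧
      tsupport (𝓕 (f : En n → ℂ)) ⊆ K ∧
      (∀ x ∈ S', f x = 0 ∧ fderiv ℝ (f : En n → ℂ) x ≠ 0) := by
  exact stmt1_general S hS K (mem_interior_iff_mem_nhds.1 h0)

end
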